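/- In the limit setting of inradius collapse, the restriction η0|_{C0²}: C0² → X_2 is a double covering map, and X_2 is open in X. -/

import Mathlib

open Metric Filter Topology Set
open scoped ENNReal NNReal Classical

noncomputable section

/-! ## Comparison geometry vocabulary -/

/-- Cosine of the comparison angle at the vertex opposite to the side of length `ab`,
for a triangle with side lengths `a`, `b`, `ab` in the simply connected model surface of
constant curvature `c` (law of cosines in the Euclidean, spherical and hyperbolic cases). -/
noncomputable def modelCosAngle (c a b ab : ℝ) : ℝ :=
  if c = 0 then (a ^ 2 + b ^ 2 - ab ^ 2) / (2 * a * b)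
  else if 0 < c then
    (Real.cos (Real.sqrt c * ab) - Real.cos (Real.sqrt c * a) * Real.cos (Real.sqrt c * b)) /
      (Real.sin (Real.sqrt c * a) * Real.sin (Real.sqrt c * b))
  else
    (Real.cosh (Real.sqrt (-c) * a) * Real.cosh (Real.sqrt (-c) * b) -
        Real.cosh (Real.sqrt (-c) * ab)) /
      (Real.sinh (Real.sqrt (-c) * a) * Real.sinh (Real.sqrt (-c) * b))

/-- The comparison angle `∠̃_c` for side lengths `a`, `b`, `ab` in the model surface of
curvature `c`. -/
noncomputable def comparisonAngle (c a b ab : ℝ) : ℝ :=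
  Real.arccos (modelCosAngle c a b ab)

/-- A geodesic metric space: every two points are joined by a minimal (unit speed) geodesic. -/
def IsGeodesicSpace (X : Type*) [MetricSpace X] : Prop :=
  ∀ x y : X, ∃ γ : ℝ → X, γ 0 = x ∧ γ (dist x y) = y ∧
    ∀ s ∈ Set.Icc (0 : ℝ) (dist x y), ∀ t ∈ Set.Icc (0 : ℝ) (dist x y),
      dist (γ s) (γ t) = |s - t|

/-- A length space (approximate-midpoints characterisation). -/
def IsLengthSpace (X : Type*) [MetricSpace X] : Prop :=
  ∀ x y : X, ∀ ε > (0 : ℝ), ∃ m : X,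
    dist x m ≤ dist x y / 2 + ε ∧ dist m y ≤ dist x y / 2 + ε

/-- An Alexandrov space with curvature bounded below by `c`: a geodesic space satisfying
the (1+3)-point comparison (the sum of comparison angles around a point is at most `2π`). -/
def IsAlexandrovCurvGE (X : Type*) [MetricSpace X] (c : ℝ) : Prop :=
  IsGeodesicSpace X ∧
  ∀ p x y z : X, p ≠ x → p ≠ y → p ≠ z →
    comparisonAngle c (dist p x) (dist p y) (dist x y) +
      comparisonAngle c (dist p y) (dist p z) (dist y z) +
      comparisonAngle c (dist p z) (dist p x) (dist z x) ≤ 2 * Real.pi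

/-- An `m`-dimensional Alexandrov space (with lower curvature bound `c`) is *almost regular*
if every point carries an `(m,δ)`-strainer for some `δ < 1/(100 m)`. -/
def IsAlmostRegular (X : Type*) [MetricSpace X] (c : ℝ) (m : ℕ) : Prop :=
  ∃ δ : ℝ, 0 < δ ∧ δ < 1 / (100 * m) ∧ ∀ x : X, ∃ a b : Fin m → X,
    (∀ i, Real.pi - δ < comparisonAngle c (dist x (a i)) (dist x (b i)) (dist (a i) (b i))) ∧
    (∀ i j, i ≠ j →
      Real.pi / 2 - δ < comparisonAngle c (dist x (a i)) (dist x (a j)) (dist (a i) (a j)) ∧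
      Real.pi / 2 - δ < comparisonAngle c (dist x (b i)) (dist x (b j)) (dist (b i) (b j)) ∧
      Real.pi / 2 - δ < comparisonAngle c (dist x (a i)) (dist x (b j)) (dist (a i) (b j)))

/-! ## Abstract manifolds with boundary -/

/-- An abstract compact Riemannian manifold with boundary: a compact metric space with a
distinguished boundary, together with predicates recording the (Riemannian) sectional
curvature lower bound and the two-sided bound on the second fundamental form of the
boundary, and the Riemannian volume. -/
structure CompactManifoldBdry : Type 1 where
  M : Type
  [metric : MetricSpace M]
  [compact : CompactSpace M]
  [nonemp : Nonempty M]
  boundary : Set M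
  boundary_closed : IsClosed boundary
  boundary_nonempty : boundary.Nonempty
  dimension : ℕ
  /-- `secCurvGE κ` records the Riemannian condition `K_M ≥ κ`. -/
  secCurvGE : ℝ → Prop
  /-- `absSecondFFLE λ` records the Riemannian condition `|II_∂M| ≤ λ`. -/
  absSecondFFLE : ℝ → Prop
  /-- the Riemannian volume of `M` -/
  volume : ℝ

attribute [instance] CompactManifoldBdry.metric CompactManifoldBdry.compact
  CompactManifoldBdry.nonemp

/-- Membership in the class `𝓜(n,κ,λ,d)`. -/
def CompactManifoldBdry.memClass (X : CompactManifoldBdry) (n : ℕ) (κ lam d : ℝ) : Prop :=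
  X.dimension = n ∧ X.secCurvGE κ ∧ X.absSecondFFLE lam ∧
    Metric.diam (Set.univ : Set X.M) ≤ d

/-- The inradius `inrad(M) = sup_{x ∈ M} d(x, ∂M)`. -/
noncomputable def CompactManifoldBdry.inradius (X : CompactManifoldBdry) : ℝ :=
  ⨆ x : X.M, Metric.infDist x X.boundary

/-- An abstract complete (not necessarily compact) Riemannian manifold with boundary,
as in the class `𝓜(n,κ,λ)`. -/
structure CompleteManifoldBdry : Type 1 where
  M : Type
  [metric : MetricSpace M]
  [complete : CompleteSpace M]
  [nonemp : Nonempty M]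
  boundary : Set M
  boundary_closed : IsClosed boundary
  boundary_nonempty : boundary.Nonempty
  dimension : ℕ
  /-- `secCurvGE κ` records the Riemannian condition `K_M ≥ κ`. -/
  secCurvGE : ℝ → Prop
  /-- `absSecondFFLE λ` records the Riemannian condition `|II_∂M| ≤ λ`. -/
  absSecondFFLE : ℝ → Prop
  /-- `isDiffeomorphicToProdInterval W` records that `M` is diffeomorphic to `W × [0,1]`. -/
  isDiffeomorphicToProdInterval : Set M → Prop

attribute [instance] CompleteManifoldBdry.metric CompleteManifoldBdry.complete
  CompleteManifoldBdry.nonemp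

/-- The inradius of a complete manifold with boundary. -/
noncomputable def CompleteManifoldBdry.inradius (X : CompleteManifoldBdry) : ℝ :=
  ⨆ x : X.M, Metric.infDist x X.boundary

/-! ## Gromov–Hausdorff convergence and inradius collapse -/

/-- Gromov–Hausdorff convergence of the sequence `Msec` to the compact metric space `N`. -/
def ghConvergesTo (Msec : ℕ → CompactManifoldBdry) (N : Type*)
    [MetricSpace N] [CompactSpace N] [Nonempty N] : Prop :=
  Tendsto (fun i => GromovHausdorff.ghDist (Msec i).M N) atTop (𝓝 0)

/-- `Msec` inradius collapses to `N`: GH-convergence together with `inrad(M_i) → 0`. -/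
def inradiusCollapsesTo (Msec : ℕ → CompactManifoldBdry) (N : Type*)
    [MetricSpace N] [CompactSpace N] [Nonempty N] : Prop :=
  ghConvergesTo Msec N ∧ Tendsto (fun i => (Msec i).inradius) atTop (𝓝 0)

/-! ## Intrinsic (induced length) metrics -/

/-- The intrinsic (induced length) distance on a subset `A` of a metric space: the infimum
of the lengths of continuous curves in `A` joining the two points. -/
noncomputable def intrinsicDist {X : Type*} [MetricSpace X] (A : Set X) (x y : X) : ℝ≥0∞ :=
  ⨅ (γ : ℝ → X) (_ : ContinuousOn γ (Set.Icc 0 1)) (_ : Set.MapsTo γ (Set.Icc 0 1) A)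
    (_ : γ 0 = x) (_ : γ 1 = y), eVariationOn γ (Set.Icc 0 1)

/-- `A` with its intrinsic length metric (`A^int`) is isometric to the metric space `N`. -/
def intrinsicIsometricTo {X : Type*} [MetricSpace X] (A : Set X) (N : Type*)
    [MetricSpace N] : Prop :=
  ∃ F : A → N, Function.Bijective F ∧
    ∀ p q : A, intrinsicDist A (p : X) (q : X) = ENNReal.ofReal (dist (F p) (F q))

/-- A minimal geodesic of `X^int` (constant speed, parametrised on `[0,1]`) joining `x`
to `y` inside the subset `X`. -/
def IsIntrinsicMinGeodesic {Y : Type*} [MetricSpace Y] (X : Set Y) (x y : Y)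
    (γ : ℝ → Y) : Prop :=
  γ 0 = x ∧ γ 1 = y ∧ Set.MapsTo γ (Set.Icc 0 1) X ∧
  ∀ s ∈ Set.Icc (0 : ℝ) 1, ∀ t ∈ Set.Icc (0 : ℝ) 1,
    intrinsicDist X (γ s) (γ t) = ENNReal.ofReal |s - t| * intrinsicDist X x y

/-! ## Geodesics, angles, spaces of directions -/

/-- A unit speed geodesic emanating from `x` (defined on some nondegenerate interval `[0,T]`). -/
def IsUnitSpeedGeodesicFrom {Y : Type*} [MetricSpace Y] (x : Y) (γ : ℝ → Y) : Prop :=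
  γ 0 = x ∧ ∃ T > (0 : ℝ), ∀ s ∈ Set.Icc (0 : ℝ) T, ∀ t ∈ Set.Icc (0 : ℝ) T,
    dist (γ s) (γ t) = |s - t|

/-- A unit speed minimal geodesic from `x` to `y`. -/
def IsMinGeodesicFromTo {Y : Type*} [MetricSpace Y] (x y : Y) (γ : ℝ → Y) : Prop :=
  γ 0 = x ∧ γ (dist x y) = y ∧
    ∀ s ∈ Set.Icc (0 : ℝ) (dist x y), ∀ t ∈ Set.Icc (0 : ℝ) (dist x y),
      dist (γ s) (γ t) = |s - t|

/-- The (upper) angle at `x` between two curves emanating from `x`, as the limit of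
Euclidean comparison angles. -/
noncomputable def upperAngleAt {Y : Type*} [MetricSpace Y] (x : Y) (α β : ℝ → Y) : ℝ :=
  Filter.limsup
    (fun st : ℝ × ℝ =>
      comparisonAngle 0 (dist x (α st.1)) (dist x (β st.2)) (dist (α st.1) (β st.2)))
    ((𝓝[>] (0 : ℝ)) ×ˢ (𝓝[>] (0 : ℝ)))

/-- Data exhibiting the metric space `S` as *the* space of directions `Σ_x(Y)`: the
completion of the set of unit speed geodesic directions at `x` equipped with the angle
metric. -/
structure DirectionSpaceData (Y : Type*) [MetricSpace Y] (x : Y) (S : Type*)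
    [MetricSpace S] where
  F : {γ : ℝ → Y // IsUnitSpeedGeodesicFrom x γ} → S
  dense : DenseRange F
  angle : ∀ α β, dist (F α) (F β) = upperAngleAt x α.1 β.1

/-- The space of directions `Σ_x(X)` of a subset `X ⊆ Y` at `x`, viewed inside a space of
directions of `Y` (presented by `F`): limits of directions of minimal geodesics from `x`
to points of `X` converging to `x`. -/
def directionsToSubset (Y : Type*) [MetricSpace Y] (x : Y) {S : Type*} [MetricSpace S]
    (F : {γ : ℝ → Y // IsUnitSpeedGeodesicFrom x γ} → S) (X : Set Y) : Set S :=
  {ξ | ∃ (y : ℕ → Y) (γ : ℕ → {γ : ℝ → Y // IsUnitSpeedGeodesicFrom x γ}),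
        (∀ i, y i ∈ X ∧ y i ≠ x ∧ IsMinGeodesicFromTo x (y i) (γ i).1) ∧
        Tendsto y atTop (𝓝 x) ∧ Tendsto (fun i => F (γ i)) atTop (𝓝 ξ)}

/-- The set of perpendicular directions to `X` at `x`: directions of the perpendiculars
`t ↦ η p t` with `η0 p = x`. -/
def perpDirectionSet {Y : Type*} [MetricSpace Y] {C0 : Type*}
    (η : C0 → ℝ → Y) (η0 : C0 → Y) (x : Y) {S : Type*} [MetricSpace S]
    (F : {γ : ℝ → Y // IsUnitSpeedGeodesicFrom x γ} → S) : Set S :=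
  {ξ | ∃ (p : C0) (h : IsUnitSpeedGeodesicFrom x (η p)), η0 p = x ∧ F ⟨η p, h⟩ = ξ}

/-- `S` is the spherical suspension with vertices `ξ₁, ξ₂` over the subset `E ⊆ S`
(the equator), via the spherical-suspension distance formula. -/
def IsSphericalSuspensionOver {S : Type*} [MetricSpace S] (ξ₁ ξ₂ : S) (E : Set S) : Prop :=
  ∃ Φ : E → ℝ → S,
    (∀ v : S, ∃ e : E, ∃ s ∈ Set.Icc (0 : ℝ) Real.pi, Φ e s = v) ∧
    (∀ e, Φ e 0 = ξ₁) ∧ (∀ e, Φ e Real.pi = ξ₂) ∧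
    (∀ e, Φ e (Real.pi / 2) = (e : S)) ∧
    ∀ (e e' : E), ∀ s ∈ Set.Icc (0 : ℝ) Real.pi, ∀ s' ∈ Set.Icc (0 : ℝ) Real.pi,
      Real.cos (dist (Φ e s) (Φ e' s')) =
        Real.cos s * Real.cos s' +
          Real.sin s * Real.sin s' * Real.cos (min (dist (e : S) (e' : S)) Real.pi)

/-- `S` is a spherical suspension with the two vertices `ξ₁, ξ₂`. -/
def IsSphericalSuspensionWithVertices {S : Type*} [MetricSpace S] (ξ₁ ξ₂ : S) : Prop :=
  ∃ E : Set S, IsSphericalSuspensionOver ξ₁ ξ₂ E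

/-- The Euclidean cone distance over a metric space (on pairs (direction, radius)). -/
noncomputable def coneDist {S : Type*} [MetricSpace S] (u v : S × ℝ) : ℝ :=
  Real.sqrt (u.2 ^ 2 + v.2 ^ 2 - 2 * u.2 * v.2 * Real.cos (min (dist u.1 v.1) Real.pi))

/-! ## Warped products and glued length metrics -/

/-- Length of the curve `(σ, ν)` in the warped product `A ×_φ ℝ` (supremum over
partitions of `[0,1]`). -/
noncomputable def warpedLengthE {A : Type*} [MetricSpace A] (φ : ℝ → ℝ)
    (σ : ℝ → A) (ν : ℝ → ℝ) : ℝ≥0∞ :=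
  ⨆ (n : ℕ) (t : Fin (n + 1) → ℝ) (_ : Monotone t)
      (_ : ∀ i, t i ∈ Set.Icc (0 : ℝ) 1) (_ : t 0 = 0) (_ : t (Fin.last n) = 1),
    ∑ i : Fin n, ENNReal.ofReal
      (Real.sqrt ((φ (ν (t i.castSucc))) ^ 2 * (dist (σ (t i.castSucc)) (σ (t i.succ))) ^ 2 +
        (ν (t i.succ) - ν (t i.castSucc)) ^ 2))

/-- The warped product distance on `A ×_φ [0,t0]`. -/
noncomputable def warpedDist {A : Type*} [MetricSpace A] (φ : ℝ → ℝ) (t0 : ℝ)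
    (x y : A × ℝ) : ℝ≥0∞ :=
  ⨅ (σ : ℝ → A) (ν : ℝ → ℝ) (_ : ContinuousOn σ (Set.Icc 0 1))
    (_ : ContinuousOn ν (Set.Icc 0 1)) (_ : ∀ s ∈ Set.Icc (0 : ℝ) 1, ν s ∈ Set.Icc (0 : ℝ) t0)
    (_ : σ 0 = x.1) (_ : ν 0 = x.2) (_ : σ 1 = y.1) (_ : ν 1 = y.2),
    warpedLengthE φ σ ν

/-- The chain (quotient length) distance generated by an elementary cost `D`. -/
noncomputable def chainDist {Z : Type*} (D : Z → Z → ℝ≥0∞) (a b : Z) : ℝ≥0∞ :=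
  ⨅ (n : ℕ) (c : Fin (n + 1) → Z) (_ : c 0 = a) (_ : c (Fin.last n) = b),
    ∑ i : Fin n, D (c i.castSucc) (c i.succ)

/-! ## Topological fibre bundles and model spaces -/

/-- `π` is a trivial bundle with fibre `F` over `U`. -/
def IsLocallyTrivialOver {E B : Type*} [TopologicalSpace E] [TopologicalSpace B]
    (F : Type*) [TopologicalSpace F] (π : E → B) (U : Set B) : Prop :=
  ∃ h : (π ⁻¹' U) ≃ₜ U × F, ∀ e : π ⁻¹' U, ((h e).1 : B) = π (e : E)

/-- `π` is a locally trivial fibre bundle with fibre `F`. -/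
def IsLocallyTrivialBundle {E B : Type*} [TopologicalSpace E] [TopologicalSpace B]
    (F : Type*) [TopologicalSpace F] (π : E → B) : Prop :=
  Continuous π ∧ Function.Surjective π ∧ ∀ b : B, ∃ U ∈ 𝓝 b, IsLocallyTrivialOver F π U

/-- Negation on `[-1,1]`. -/
def negIcc (t : Set.Icc (-1 : ℝ) 1) : Set.Icc (-1 : ℝ) 1 :=
  ⟨-(t : ℝ), Set.mem_Icc.mpr
    ⟨by linarith [(Set.mem_Icc.mp t.2).2], by linarith [(Set.mem_Icc.mp t.2).1]⟩⟩

/-- The identification `(0,y) ∼ (0,-y)` on `[0,1) × [-1,1]`. -/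
def RModelRel (a b : Set.Ico (0 : ℝ) 1 × Set.Icc (-1 : ℝ) 1) : Prop :=
  (a.1 : ℝ) = 0 ∧ (b.1 : ℝ) = 0 ∧ (b.2 : ℝ) = -(a.2 : ℝ)

/-- The model `R = [0,1) × [-1,1] / (0,y) ∼ (0,-y)` for singular `I`-fibres. -/
def RModel : Type := Quot RModelRel

instance : TopologicalSpace RModel := by unfold RModel; infer_instance

/-- The projection `R → [0,1)`. -/
def RModel.proj : RModel → Set.Ico (0 : ℝ) 1 :=
  Quot.lift (fun a => a.1) (fun _ _ h => Subtype.ext (h.1.trans h.2.1.symm))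

/-- The reflection `(x,y) ↦ (x,-y)` of `R`. -/
def RModel.reflect : RModel → RModel :=
  Quot.lift (fun a => Quot.mk RModelRel (a.1, negIcc a.2))
    (fun a b h => Quot.sound ⟨h.1, h.2.1, by
      show -(b.2 : ℝ) = -(-(a.2 : ℝ)); rw [h.2.2]⟩)

/-- Twisted `I`-bundle `(P × [-1,1]) / (x,t) ∼ (σ x, -t)`. -/
def TwistedIBundle (P : Type*) (σ : P → P) :=
  Quot (fun a b : P × Set.Icc (-1 : ℝ) 1 => b = (σ a.1, negIcc a.2))

instance (P : Type*) [TopologicalSpace P] (σ : P → P) :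
    TopologicalSpace (TwistedIBundle P σ) := by unfold TwistedIBundle; infer_instance

/-- Twisted singular-`I`-bundle model `(P × R) / (p, r) ∼ (σ p, reflect r)`. -/
def TwistedRModel (P : Type*) (σ : P → P) :=
  Quot (fun a b : P × RModel => b = (σ a.1, RModel.reflect a.2))

instance (P : Type*) [TopologicalSpace P] (σ : P → P) :
    TopologicalSpace (TwistedRModel P σ) := by unfold TwistedRModel; infer_instance

/-- `a ∼ b` iff they are corresponding boundary points of the two copies. -/
def DoubleSpaceRel (N : Type*) (B : Set N) (a b : N ⊕ N) : Prop :=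
  ∃ x ∈ B, a = Sum.inl x ∧ b = Sum.inr x

/-- The double `D(N)` of `N` along `B` (two copies glued along `B`). -/
def DoubleSpace (N : Type*) (B : Set N) := Quot (DoubleSpaceRel N B)

instance (N : Type*) [TopologicalSpace N] (B : Set N) :
    TopologicalSpace (DoubleSpace N B) := by unfold DoubleSpace; infer_instance

/-- The canonical reflection of the double. -/
def DoubleSpace.reflect (N : Type*) (B : Set N) : DoubleSpace N B → DoubleSpace N B :=
  Quot.lift (fun a => Quot.mk _ a.swap)
    (by rintro a b ⟨x, hx, rfl, rfl⟩; exact (Quot.sound ⟨x, hx, rfl, rfl⟩).symm)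

/-- The upper half disk `D²₊`. -/
def upperHalfDisk : Set (ℝ × ℝ) := {z | z.1 ^ 2 + z.2 ^ 2 ≤ 1 ∧ 0 ≤ z.2}

/-- `π⁻¹(V)` is isomorphic (as a singular `I`-fibred space over the collar
`φc : V ≃ Bc × [0,1)`) to the product singular `I`-bundle model `Bc × R`. -/
def ProductSingularModel {M N : Type*} [TopologicalSpace M] [TopologicalSpace N]
    (π : M → N) (V : Set N) (Bc : Set N)
    (φc : V ≃ₜ Bc × Set.Ico (0 : ℝ) 1) : Prop :=
  ∃ h : (π ⁻¹' V) ≃ₜ Bc × RModel,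
    ∀ e : π ⁻¹' V, (φc ⟨π (e : M), e.2⟩).1 = (h e).1 ∧
      (φc ⟨π (e : M), e.2⟩).2 = RModel.proj (h e).2

/-- `π⁻¹(V)` is isomorphic to the twisted singular `I`-bundle model
`(P × R)/Φ` over `Bc`, for some free two-fold covering involution of `P`. -/
def TwistedSingularModel {M N : Type*} [TopologicalSpace M] [TopologicalSpace N]
    (π : M → N) (V : Set N) (Bc : Set N) : Prop :=
  ∃ (P : TopCat.{0}) (ρ : P → Bc) (σ : P → P),
    IsCoveringMap ρ ∧ (∀ x : Bc, Set.ncard (ρ ⁻¹' {x}) = 2) ∧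
    Continuous σ ∧ (∀ p, ρ (σ p) = ρ p) ∧ (∀ p, σ (σ p) = p) ∧ (∀ p, σ p ≠ p) ∧
    Nonempty ((π ⁻¹' V) ≃ₜ TwistedRModel P σ)

/-! ## The limit setting of inradius collapse -/

/-- The limit configuration of an inradius collapsing sequence
`M_i ∈ 𝓜(n,κ,λ,d)`, `inrad(M_i) → 0`:  `N` is the GH-limit of the `M_i`; the extensions
`\tilde M_i = M_i ∪_{∂M_i} (∂M_i ×_φ [0,t0])` converge to the compact Alexandrov space
`Y`; the `M_i` with exterior metric converge to the closed subset `X ⊆ Y`; the intrinsic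
boundaries `(∂M_i)^int` converge to `C0`; and `η : C0 × [0,t0] → Y` is the limit gluing
map (`η p` is the perpendicular to `X` at `η0 p`), with `η0 = η(·,0) : C0 → X`. -/
structure InradiusCollapseLimit : Type 1 where
  n : ℕ
  κ : ℝ
  lam : ℝ
  d : ℝ
  Msec : ℕ → CompactManifoldBdry
  mem : ∀ i, (Msec i).memClass n κ lam d
  N : Type
  [metN : MetricSpace N]
  [cptN : CompactSpace N]
  [neN : Nonempty N]
  lengthN : IsLengthSpace N
  collapse : inradiusCollapsesTo Msec N
  t0 : ℝ
  ε0 : ℝ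
  ht0 : 0 < t0
  hε0 : 0 < ε0 ∧ ε0 < 1
  φ : ℝ → ℝ
  hφ0 : φ 0 = 1
  hφt0 : φ t0 = ε0
  hφpos : ∀ t ∈ Set.Icc (0 : ℝ) t0, 0 < φ t
  hφanti : AntitoneOn φ (Set.Icc (0 : ℝ) t0)
  Y : Type
  [metY : MetricSpace Y]
  [cptY : CompactSpace Y]
  [neY : Nonempty Y]
  alexY : ∃ c : ℝ, IsAlexandrovCurvGE Y c
  X : Set Y
  hXclosed : IsClosed X
  hXne : X.Nonempty
  hXapprox : ∀ ε > (0 : ℝ), ∀ᶠ i in Filter.atTop, ∃ g : (Msec i).M → Y,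
      (∀ a, g a ∈ X) ∧ (∀ x ∈ X, ∃ a, dist (g a) x < ε) ∧
      (∀ a b, dist (g a) (g b) ≤ dist a b + ε) ∧
      (∀ a b, dist a b ≤ dist (g a) (g b) / ε0 + ε)
  C0 : Type
  [metC0 : MetricSpace C0]
  [cptC0 : CompactSpace C0]
  [neC0 : Nonempty C0]
  lengthC0 : IsLengthSpace C0
  hC0approx : ∀ ε > (0 : ℝ), ∀ᶠ i in Filter.atTop, ∃ ψ : (Msec i).boundary → C0,
      (∀ p : C0, ∃ a, dist (ψ a) p < ε) ∧
      ∀ a b : (Msec i).boundary,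
        |dist (ψ a) (ψ b) -
          (intrinsicDist (Msec i).boundary (a : (Msec i).M) (b : (Msec i).M)).toReal| < ε
  η : C0 → ℝ → Y
  η0 : C0 → Y
  hη0 : ∀ p, η0 p = η p 0
  hη0X : ∀ p, η0 p ∈ X
  hη0surj : ∀ x ∈ X, ∃ p, η0 p = x
  hperp : ∀ p, ∀ s ∈ Set.Icc (0 : ℝ) t0, ∀ t ∈ Set.Icc (0 : ℝ) t0,
      dist (η p s) (η p t) = |s - t|
  hdistX : ∀ p, ∀ t ∈ Set.Icc (0 : ℝ) t0, Metric.infDist (η p t) X = t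
  hηsurj : ∀ y : Y, ∃ p, ∃ t ∈ Set.Icc (0 : ℝ) t0, η p t = y
  hηinj : ∀ p q s t, s ∈ Set.Ioc (0 : ℝ) t0 → t ∈ Set.Ioc (0 : ℝ) t0 →
      η p s = η q t → p = q ∧ s = t
  hηslices : ∀ p q : C0, ∀ t ∈ Set.Icc (0 : ℝ) t0, dist (η p t) (η q t) ≤ dist p q

attribute [instance] InradiusCollapseLimit.metN InradiusCollapseLimit.cptN
  InradiusCollapseLimit.neN InradiusCollapseLimit.metY InradiusCollapseLimit.cptY
  InradiusCollapseLimit.neY InradiusCollapseLimit.metC0 InradiusCollapseLimit.cptC0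
  InradiusCollapseLimit.neC0

namespace InradiusCollapseLimit

/-- `X_1`: points of `X` with exactly one `η0`-preimage. -/
def X1set (S : InradiusCollapseLimit) : Set S.Y :=
  {x | x ∈ S.X ∧ ∃! p : S.C0, S.η0 p = x}

/-- `X_2`: points of `X` with (exactly) two `η0`-preimages. -/
def X2set (S : InradiusCollapseLimit) : Set S.Y :=
  {x | x ∈ S.X ∧ ∃ p q : S.C0, p ≠ q ∧ S.η0 p = x ∧ S.η0 q = x}

/-- Elementary cost for building the glued length space `X^int ∪_{η0} C0 ×_φ [0,t0]`:
within each piece, the respective length metric; across the pieces, only the gluing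
identification `(p,0) ∼ η0 p` (at cost `0`). -/
noncomputable def gluedPieceDist (S : InradiusCollapseLimit) :
    ((↥S.X) ⊕ (S.C0 × ℝ)) → ((↥S.X) ⊕ (S.C0 × ℝ)) → ℝ≥0∞
  | Sum.inl x, Sum.inl x' => intrinsicDist S.X (x : S.Y) (x' : S.Y)
  | Sum.inr c, Sum.inr c' => warpedDist S.φ S.t0 c c'
  | Sum.inl x, Sum.inr c => if S.η0 c.1 = (x : S.Y) ∧ c.2 = 0 then 0 else ⊤
  | Sum.inr c, Sum.inl x => if S.η0 c.1 = (x : S.Y) ∧ c.2 = 0 then 0 else ⊤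

/-- The underlying set of the glued space `X^int ∪_{η0} C0 ×_φ [0,t0]`. -/
def gluedDomain (S : InradiusCollapseLimit) : Set ((↥S.X) ⊕ (S.C0 × ℝ)) :=
  Set.range Sum.inl ∪ Sum.inr '' {c : S.C0 × ℝ | c.2 ∈ Set.Icc (0 : ℝ) S.t0}

/-- Elementary cost for the quotient `C0 ×_φ [0,t0] / (p,0) ∼ (f p,0)`. -/
noncomputable def quotWarpedPieceDist (S : InradiusCollapseLimit) (f : S.C0 → S.C0) :
    (S.C0 × ℝ) → (S.C0 × ℝ) → ℝ≥0∞ :=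
  fun a b =>
    min (warpedDist S.φ S.t0 a b)
      (if a.2 = 0 ∧ b.2 = 0 ∧ (b.1 = f a.1 ∨ b.1 = a.1) then 0 else ⊤)

end InradiusCollapseLimit

end

/-!
Let `x = η0 p = η0 q` with `p ≠ q`. A geodesic from `η p s` to `η q s` with `s` small has to cross
`X`, so the two perpendiculars over `x` together form a geodesic. Suppose that `x' ∈ X` near `x` is
not of the form `η0 w` with `w` near `p`. Then a geodesic from `x'` to `η p s` starts with points
`z = η w τ`, `w` near `q`. At `z` the comparison angles for the three points `x'`, `η p s`, `η w s`
are `π`, almost `π`, and almost `π / 2` at least (as `η w s` is not closer to `x'` than to `z`),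
which contradicts the curvature bound. Hence `η0` is open at `p` and, by symmetry, at `q`. An open
and closed map all of whose fibres have two points is a covering, and points of `X` near `x` have
a preimage near `p` and one near `q`.
-/

section CoveringMap

theorem eq_pair_of_subset_pair {α : Type*} {s : Set α} {a b p q : α} (hs : s ⊆ {a, b})
    (hp : p ∈ s) (hq : q ∈ s) (hpq : p ≠ q) : s = {p, q} := by
  grind

variable {E B : Type*} [TopologicalSpace E] [TopologicalSpace B] {f : E → B}

theorem isOpenMap_restrictPreimage {D : Set B}
    (hf : ∀ p ∈ f ⁻¹' D, 𝓝[D] (f p) ≤ map f (𝓝 p)) : IsOpenMap (D.restrictPreimage f) := by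
  refine IsOpenMap.of_nhds_le fun p => (Filter.map_le_map_iff Subtype.val_injective).mp ?_
  calc map Subtype.val (𝓝 (D.restrictPreimage f p)) = 𝓝[D] (f p) := map_nhds_subtype_val _
    _ ≤ map f (𝓝 p) ⊓ 𝓟 D := le_inf (hf p p.2) inf_le_right
    _ = map f (𝓝[f ⁻¹' D] p) := (map_inf_principal_preimage ..).symm
    _ = map Subtype.val (map (D.restrictPreimage f) (𝓝 p)) := by
      rw [← map_nhds_subtype_val, Filter.map_map, Filter.map_map]
      rfl

theorem exists_isOpen_eq_inter {A D : Set B} (hDA : D ⊆ A) (hD : ∀ x ∈ D, D ∈ 𝓝[A] x) :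
    ∃ U, IsOpen U ∧ D = U ∩ A := by
  refine ⟨interior {x | x ∈ A → x ∈ D}, isOpen_interior, Subset.antisymm (fun x hx => ?_) ?_⟩
  · exact ⟨mem_interior_iff_mem_nhds.mpr (mem_nhdsWithin_iff_eventually.mp (hD x hx)), hDA hx⟩
  · rintro x ⟨hx, hxA⟩
    exact interior_subset hx hxA

theorem ncard_preimage_restrictPreimage {α β : Type*} (f : α → β) {D : Set β} (y : D) :
    (D.restrictPreimage f ⁻¹' {y}).ncard = (f ⁻¹' {(y : β)}).ncard := by
  have hval : D.restrictPreimage f ⁻¹' {y} = Subtype.val ⁻¹' (f ⁻¹' {(y : β)}) := by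
    ext a
    simp [Subtype.ext_iff]
  rw [hval, ncard_preimage_of_injective_subset_range Subtype.val_injective]
  rw [Subtype.range_val]
  exact preimage_mono (singleton_subset_iff.mpr y.2)

theorem eventually_exists_ne_of_nhdsWithin_le_map [T2Space E] {A : Set B} {p q : E} {y : B}
    (hpq : p ≠ q) (hp : 𝓝[A] y ≤ map f (𝓝 p)) (hq : 𝓝[A] y ≤ map f (𝓝 q)) :
    ∀ᶠ z in 𝓝[A] y, ∃ a b, a ≠ b ∧ f a = z ∧ f b = z := by
  obtain ⟨V, W, hV, hW, hpV, hqW, hVW⟩ := t2_separation hpq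
  filter_upwards [hp (image_mem_map (hV.mem_nhds hpV)), hq (image_mem_map (hW.mem_nhds hqW))]
  rintro z ⟨a, ha, hza⟩ ⟨b, hb, hzb⟩
  exact ⟨a, b, hVW.ne_of_mem ha hb, hza, hzb⟩

/-- The sheets through the `n` points of a fibre already contain all `n` points of every nearby
fibre, so each sheet contains only one of them. -/
theorem isLocallyInjective_of_ncard_fiber_eq [T2Space E] (hcont : Continuous f)
    (hopen : IsOpenMap f) {n : ℕ} (hn : n ≠ 0) (hcard : ∀ y, (f ⁻¹' {y}).ncard = n) :
    IsLocallyInjective f := by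
  intro p
  have hfin (y : B) : (f ⁻¹' {y}).Finite := finite_of_ncard_ne_zero (hcard y ▸ hn)
  obtain ⟨U, hU, hdisj⟩ := (hfin (f p)).t2_separation
  set N : Set B := ⋂ x ∈ f ⁻¹' {f p}, f '' U x
  have hN : IsOpen N := (hfin (f p)).isOpen_biInter fun x _ => hopen _ (hU x).2
  have hpN : f p ∈ N := mem_iInter₂.mpr fun x hx => ⟨x, (hU x).1, hx⟩
  refine ⟨U p ∩ f ⁻¹' N, (hU p).2.inter (hN.preimage hcont), ⟨(hU p).1, hpN⟩, ?_⟩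
  rintro a ⟨haU, haN⟩ b ⟨hbU, -⟩ hab
  choose! g hgU hg using mem_iInter₂.mp haN
  have hginj : InjOn g (f ⁻¹' {f p}) := fun x hx x' hx' h => by
    by_contra hne
    exact disjoint_left.mp (hdisj hx hx' hne) (hgU x hx) (h ▸ hgU x' hx')
  have himage : g '' (f ⁻¹' {f p}) = f ⁻¹' {f a} :=
    eq_of_subset_of_ncard_le (image_subset_iff.mpr hg)
      (by rw [hginj.ncard_image, hcard, hcard]) (hfin _)
  have hmem (e : E) (heU : e ∈ U p) (he : e ∈ f ⁻¹' {f a}) : e = g p := by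
    obtain ⟨x, hx, rfl⟩ := himage.superset he
    by_contra hne
    exact disjoint_left.mp (hdisj hx rfl fun h => hne (h ▸ rfl)) (hgU x hx) heU
  rw [hmem a haU rfl, hmem b hbU hab.symm]

theorem isCoveringMap_of_ncard_fiber_eq [T2Space E] (hcont : Continuous f) (hopen : IsOpenMap f)
    (hclosed : IsClosedMap f) {n : ℕ} (hn : n ≠ 0) (hcard : ∀ y, (f ⁻¹' {y}).ncard = n) :
    IsCoveringMap f := by
  have hlocal : IsLocalHomeomorph f := by
    refine isLocalHomeomorph_iff_isOpenEmbedding_restrict.mpr fun p => ?_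
    obtain ⟨U, hU, hpU, hinj⟩ := isLocallyInjective_of_ncard_fiber_eq hcont hopen hn hcard p
    exact ⟨U, hU.mem_nhds hpU, .of_continuous_injective_isOpenMap
      (hcont.comp continuous_subtype_val) hinj.injective (hopen.comp hU.isOpenMap_subtype_val)⟩
  rw [isCoveringMap_iff_isCoveringMapOn_univ]
  exact hclosed.isCoveringMapOn_of_isLocalHomeomorphOn
    (fun y _ => finite_of_ncard_ne_zero (hcard y ▸ hn))
    (hlocal.isLocalHomeomorphOn.mono (subset_univ _))

end CoveringMap

section ModelTrigonometry

/-- The generalised sine `sn_c` of the model surface of curvature `c`: the solution of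
`f'' = -c f`, `f 0 = 0`, `f' 0 = 1`. -/
noncomputable def modelSin (c t : ℝ) : ℝ :=
  if c = 0 then t
  else if 0 < c then Real.sin (√c * t) / √c
  else Real.sinh (√(-c) * t) / √(-c)

/-- The generalised versine `md_c`, the primitive of `sn_c` vanishing at `0`. In terms of it the
laws of cosines for all curvatures take one form, see `modelCosAngle_eq`. -/
noncomputable def modelVersine (c t : ℝ) : ℝ :=
  if c = 0 then t ^ 2 / 2
  else if 0 < c then (1 - Real.cos (√c * t)) / c
  else (1 - Real.cosh (√(-c) * t)) / c

theorem curvature_induction {P : ℝ → Prop} (zero : P 0) (sq : ∀ k : ℝ, 0 < k → P (k ^ 2))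
    (neg_sq : ∀ k : ℝ, 0 < k → P (-k ^ 2)) (c : ℝ) : P c := by
  rcases lt_trichotomy c 0 with hc | rfl | hc
  · have h := neg_sq (√(-c)) (Real.sqrt_pos.mpr (neg_pos.mpr hc))
    rwa [Real.sq_sqrt (neg_nonneg.mpr hc.le), neg_neg] at h
  · exact zero
  · have h := sq (√c) (Real.sqrt_pos.mpr hc)
    rwa [Real.sq_sqrt hc.le] at h

variable {k t : ℝ}

@[simp] theorem modelSin_zero_left : modelSin 0 t = t := if_pos rfl

theorem modelSin_sq (hk : 0 < k) : modelSin (k ^ 2) t = Real.sin (k * t) / k := by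
  simp only [modelSin, (pow_pos hk 2).ne', pow_pos hk 2, if_true, if_false, Real.sqrt_sq hk.le]

theorem modelSin_neg_sq (hk : 0 < k) : modelSin (-k ^ 2) t = Real.sinh (k * t) / k := by
  simp only [modelSin, (neg_neg_of_pos (pow_pos hk 2)).ne, (neg_neg_of_pos (pow_pos hk 2)).not_gt,
    if_false, neg_neg, Real.sqrt_sq hk.le]

@[simp] theorem modelVersine_zero_left : modelVersine 0 t = t ^ 2 / 2 := if_pos rfl

theorem modelVersine_sq (hk : 0 < k) :
    modelVersine (k ^ 2) t = (1 - Real.cos (k * t)) / k ^ 2 := by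
  simp only [modelVersine, (pow_pos hk 2).ne', pow_pos hk 2, if_true, if_false,
    Real.sqrt_sq hk.le]

theorem modelVersine_neg_sq (hk : 0 < k) :
    modelVersine (-k ^ 2) t = (Real.cosh (k * t) - 1) / k ^ 2 := by
  simp only [modelVersine, (neg_neg_of_pos (pow_pos hk 2)).ne,
    (neg_neg_of_pos (pow_pos hk 2)).not_gt, if_false, neg_neg, Real.sqrt_sq hk.le, div_neg,
    ← neg_div, neg_sub]

variable (c : ℝ)

@[simp] theorem modelSin_zero_right : modelSin c 0 = 0 := by simp [modelSin]

theorem continuous_modelSin : Continuous (modelSin c) := by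
  unfold modelSin; split_ifs <;> fun_prop

theorem continuous_modelVersine : Continuous (modelVersine c) := by
  unfold modelVersine; split_ifs <;> fun_prop

@[simp] theorem modelVersine_zero_right : modelVersine c 0 = 0 := by simp [modelVersine]

theorem modelSin_sq_eq (t : ℝ) :
    modelSin c t ^ 2 = modelVersine c t * (2 - c * modelVersine c t) := by
  induction c using curvature_induction with
  | zero => simp only [modelSin_zero_left, modelVersine_zero_left]; ring
  | sq k hk =>
    rw [modelSin_sq hk, modelVersine_sq hk, div_pow, Real.sin_sq]
    field_simp
    ring
  | neg_sq k hk =>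
    rw [modelSin_neg_sq hk, modelVersine_neg_sq hk, div_pow, Real.sinh_sq]
    field_simp
    ring

theorem modelVersine_add (a b : ℝ) :
    modelVersine c (a + b) = modelVersine c a + modelVersine c b
      - c * modelVersine c a * modelVersine c b + modelSin c a * modelSin c b := by
  induction c using curvature_induction with
  | zero => simp only [modelSin_zero_left, modelVersine_zero_left]; ring
  | sq k hk =>
    simp only [modelSin_sq hk, modelVersine_sq hk, mul_add, Real.cos_add]
    field_simp
    ring
  | neg_sq k hk =>
    simp only [modelSin_neg_sq hk, modelVersine_neg_sq hk, mul_add, Real.cosh_add]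
    field_simp
    ring

theorem modelCosAngle_eq (a b d : ℝ) :
    modelCosAngle c a b d =
      (modelVersine c a + modelVersine c b - modelVersine c d
        - c * modelVersine c a * modelVersine c b) / (modelSin c a * modelSin c b) := by
  induction c using curvature_induction with
  | zero =>
    simp only [modelCosAngle, if_true, modelSin_zero_left, modelVersine_zero_left]
    rw [mul_assoc, ← div_div]
    ring
  | sq k hk =>
    simp only [modelCosAngle, (pow_pos hk 2).ne', pow_pos hk 2, if_true, if_false,
      Real.sqrt_sq hk.le, modelSin_sq hk, modelVersine_sq hk]
    rw [div_mul_div_comm, div_div_eq_mul_div]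
    field_simp
    ring
  | neg_sq k hk =>
    simp only [modelCosAngle, (neg_neg_of_pos (pow_pos hk 2)).ne,
      (neg_neg_of_pos (pow_pos hk 2)).not_gt, if_false, neg_neg, Real.sqrt_sq hk.le,
      modelSin_neg_sq hk, modelVersine_neg_sq hk]
    rw [div_mul_div_comm, div_div_eq_mul_div]
    field_simp
    ring

variable {c}

-- For `c ≤ 0` the condition `√c * t < π` is void, since then `√c = 0`.
theorem modelSin_pos (ht : 0 < t) (hct : √c * t < Real.pi) : 0 < modelSin c t := by
  induction c using curvature_induction with
  | zero => rwa [modelSin_zero_left]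
  | sq k hk =>
    rw [Real.sqrt_sq hk.le] at hct
    rw [modelSin_sq hk]
    exact div_pos (Real.sin_pos_of_pos_of_lt_pi (mul_pos hk ht) hct) hk
  | neg_sq k hk =>
    rw [modelSin_neg_sq hk]
    exact div_pos (Real.sinh_pos_iff.mpr (mul_pos hk ht)) hk

theorem modelVersine_le_modelVersine {a b : ℝ} (ha : 0 ≤ a) (hab : a ≤ b)
    (hcb : √c * b ≤ Real.pi) : modelVersine c a ≤ modelVersine c b := by
  induction c using curvature_induction with
  | zero => simp only [modelVersine_zero_left]; gcongr
  | sq k hk =>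
    rw [Real.sqrt_sq hk.le] at hcb
    have hcos : Real.cos (k * b) ≤ Real.cos (k * a) :=
      Real.cos_le_cos_of_nonneg_of_le_pi (by positivity) hcb (by gcongr)
    rw [modelVersine_sq hk, modelVersine_sq hk]
    gcongr
  | neg_sq k hk =>
    have hcosh : Real.cosh (k * a) ≤ Real.cosh (k * b) :=
      Real.cosh_strictMonoOn.monotoneOn (Set.mem_Ici.mpr (by positivity))
        (Set.mem_Ici.mpr (mul_nonneg hk.le (ha.trans hab))) (by gcongr)
    rw [modelVersine_neg_sq hk, modelVersine_neg_sq hk]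
    gcongr

end ModelTrigonometry

section ComparisonAngle

variable {c : ℝ}

theorem comparisonAngle_add {a b : ℝ} (ha : 0 < a) (hb : 0 < b) (hca : √c * a < Real.pi)
    (hcb : √c * b < Real.pi) : comparisonAngle c a b (a + b) = Real.pi := by
  have hsin : modelSin c a * modelSin c b ≠ 0 :=
    (mul_pos (modelSin_pos ha hca) (modelSin_pos hb hcb)).ne'
  have hcos : modelCosAngle c a b (a + b) = -1 := by
    rw [modelCosAngle_eq, modelVersine_add, div_eq_iff hsin]
    ring
  rw [comparisonAngle, hcos, Real.arccos_neg_one]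

theorem continuousAt_comparisonAngle {a b d : ℝ} (ha : 0 < a) (hb : 0 < b)
    (hca : √c * a < Real.pi) (hcb : √c * b < Real.pi) :
    ContinuousAt (fun v : ℝ × ℝ × ℝ => comparisonAngle c v.1 v.2.1 v.2.2) (a, b, d) := by
  have hsin : modelSin c a * modelSin c b ≠ 0 :=
    (mul_pos (modelSin_pos ha hca) (modelSin_pos hb hcb)).ne'
  have hsn := continuous_modelSin c
  have hmd := continuous_modelVersine c
  simp only [comparisonAngle, modelCosAngle_eq]
  exact Real.continuous_arccos.continuousAt.comp
    (ContinuousAt.div (by fun_prop) (by fun_prop) hsin)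

theorem comparisonAngle_mono {a b d d' : ℝ} (ha : 0 < a) (hb : 0 < b) (hca : √c * a < Real.pi)
    (hcb : √c * b < Real.pi) (hd : 0 ≤ d) (hdd' : d ≤ d') (hcd' : √c * d' ≤ Real.pi) :
    comparisonAngle c a b d ≤ comparisonAngle c a b d' := by
  have hsin : 0 < modelSin c a * modelSin c b :=
    mul_pos (modelSin_pos ha hca) (modelSin_pos hb hcb)
  have hmd := modelVersine_le_modelVersine hd hdd' hcd'
  refine Real.arccos_le_arccos ?_
  rw [modelCosAngle_eq, modelCosAngle_eq]
  gcongr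

theorem modelVersine_div_modelSin {r : ℝ} (hr : modelSin c r ≠ 0) :
    modelVersine c r / modelSin c r = modelSin c r / (2 - c * modelVersine c r) := by
  have hsq := modelSin_sq_eq c r
  have hne : 2 - c * modelVersine c r ≠ 0 := by
    rintro h
    rw [h, mul_zero] at hsq
    exact hr (pow_eq_zero_iff two_ne_zero |>.mp hsq)
  rw [div_eq_div_iff hr hne, ← hsq, sq]

theorem tendsto_comparisonAngle_isosceles {s : ℝ} (hs : 0 < s) (hcs : √c * s < Real.pi) :
    Tendsto (fun v : ℝ × ℝ => comparisonAngle c v.1 v.2 v.1) (𝓝 s ×ˢ 𝓝[>] 0)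
      (𝓝 (Real.pi / 2)) := by
  have hsn := continuous_modelSin c
  have hmd := continuous_modelVersine c
  have hsmall : ∀ᶠ r in 𝓝[>] (0 : ℝ), modelSin c r ≠ 0 := by
    have hlt : ∀ᶠ r in 𝓝 (0 : ℝ), √c * r < Real.pi :=
      (continuous_const_mul (√c)).continuousAt.eventually_lt_const (by simpa using Real.pi_pos)
    filter_upwards [self_mem_nhdsWithin, hlt.filter_mono nhdsWithin_le_nhds] with r hr hcr
    exact (modelSin_pos hr hcr).ne'
  have hcos : (fun v : ℝ × ℝ => modelSin c v.2 / (2 - c * modelVersine c v.2)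
        * ((1 - c * modelVersine c v.1) / modelSin c v.1))
      =ᶠ[𝓝 s ×ˢ 𝓝[>] 0] fun v => modelCosAngle c v.1 v.2 v.1 := by
    filter_upwards [hsmall.prod_inr (𝓝 s)] with v hv
    rw [← modelVersine_div_modelSin hv, modelCosAngle_eq, div_mul_div_comm,
      mul_comm (modelSin c v.1)]
    ring
  have hlim : ContinuousAt (fun v : ℝ × ℝ => modelSin c v.2 / (2 - c * modelVersine c v.2)
      * ((1 - c * modelVersine c v.1) / modelSin c v.1)) (s, 0) := by
    refine ContinuousAt.mul (ContinuousAt.div (by fun_prop) (by fun_prop) ?_)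
      (ContinuousAt.div (by fun_prop) (by fun_prop) (modelSin_pos hs hcs).ne')
    simp
  have hle : 𝓝 s ×ˢ 𝓝[>] (0 : ℝ) ≤ 𝓝 (s, 0) :=
    (Filter.prod_mono_right _ nhdsWithin_le_nhds).trans_eq nhds_prod_eq.symm
  have hzero := (hlim.tendsto.mono_left hle).congr' hcos
  simp only [modelSin_zero_right, zero_div, zero_mul] at hzero
  simpa only [comparisonAngle, Real.arccos_zero, Function.comp_def] using
    (Real.continuous_arccos.tendsto 0).comp hzero

end ComparisonAngle

section AlexandrovSpace

variable {Y : Type*} [MetricSpace Y]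

theorem IsGeodesicSpace.exists_isPreconnected (hY : IsGeodesicSpace Y) (x y : Y) :
    ∃ Γ : Set Y, IsPreconnected Γ ∧ x ∈ Γ ∧ y ∈ Γ ∧
      ∀ z ∈ Γ, dist x z + dist z y = dist x y := by
  obtain ⟨γ, hγx, hγy, hγ⟩ := hY x y
  have hleft : 0 ∈ Icc 0 (dist x y) := left_mem_Icc.mpr dist_nonneg
  have hright : dist x y ∈ Icc 0 (dist x y) := right_mem_Icc.mpr dist_nonneg
  have hlip : LipschitzOnWith 1 γ (Icc 0 (dist x y)) :=
    LipschitzOnWith.of_dist_le_mul fun s hs t ht => by simp [hγ s hs t ht, Real.dist_eq]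
  refine ⟨γ '' Icc 0 (dist x y), isPreconnected_Icc.image γ hlip.continuousOn,
    ⟨0, hleft, hγx⟩, ⟨_, hright, hγy⟩, ?_⟩
  rintro _ ⟨t, ht, rfl⟩
  have hx := hγ 0 hleft t ht
  have hy := hγ t ht _ hright
  rw [hγx, zero_sub, abs_neg, abs_of_nonneg ht.1] at hx
  rw [hγy, abs_sub_comm, abs_of_nonneg (sub_nonneg.mpr ht.2)] at hy
  rw [hx, hy, add_sub_cancel]

theorem IsGeodesicSpace.frequently_between (hY : IsGeodesicSpace Y) {x y : Y} (hxy : x ≠ y) :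
    ∃ᶠ z in 𝓝 x, z ≠ x ∧ dist x z + dist z y = dist x y := by
  obtain ⟨Γ, hΓ, hx, hy, hdist⟩ := hY.exists_isPreconnected x y
  have hacc : AccPt x (𝓟 Γ) := hΓ.preperfect_of_nontrivial ⟨x, hx, y, hy, hxy⟩ x hx
  exact (accPt_iff_frequently.mp hacc).mono fun z hz => ⟨hz.1, hdist z hz.2⟩

theorem IsGeodesicSpace.eventually_exists_between_mem_inter (hY : IsGeodesicSpace Y) {x : Y}
    {A B : Set Y} (hA : IsClosed A) (hB : IsClosed B) (hAB : A ∪ B ∈ 𝓝 x) :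
    ∀ᶠ v : Y × Y in 𝓝 (x, x), v.1 ∈ A → v.2 ∈ B →
      ∃ z ∈ A ∩ B, dist v.1 z + dist z v.2 = dist v.1 v.2 := by
  obtain ⟨ε, hε, hball⟩ := Metric.mem_nhds_iff.mp hAB
  have hnear : ∀ᶠ v : Y × Y in 𝓝 (x, x), dist v.1 v.2 + dist v.1 x < ε :=
    (Continuous.tendsto (by fun_prop) _).eventually_lt_const (by simpa using hε)
  filter_upwards [hnear]
  rintro ⟨y, u⟩ hyu hy hu
  obtain ⟨Γ, hΓ, hyΓ, huΓ, hdist⟩ := hY.exists_isPreconnected y u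
  have hcover : Γ ⊆ A ∪ B := fun z hz => hball <| by
    rw [mem_ball]
    linarith [hdist z hz, dist_triangle_left z x y, dist_nonneg (x := z) (y := u)]
  obtain ⟨z, hz, hzAB⟩ := isPreconnected_closed_iff.mp hΓ A B hA hB hcover
    ⟨y, hyΓ, hy⟩ ⟨u, huΓ, hu⟩
  exact ⟨z, hzAB, hdist z hz⟩

theorem tendsto_comparisonAngle_of_between {c : ℝ} {x y u : Y} (hyx : y ≠ x) (hux : u ≠ x)
    (hyu : dist y u = dist y x + dist x u) (hcy : √c * dist y x < Real.pi)
    (hcu : √c * dist x u < Real.pi) :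
    Tendsto (fun v : Y × Y => comparisonAngle c (dist v.1 y) (dist v.1 v.2) (dist y v.2))
      (𝓝 (x, u)) (𝓝 Real.pi) := by
  have hy : 0 < dist x y := dist_pos.mpr hyx.symm
  have hu : 0 < dist x u := dist_pos.mpr hux.symm
  rw [dist_comm] at hcy
  have hpi : comparisonAngle c (dist x y) (dist x u) (dist y u) = Real.pi := by
    rw [hyu, dist_comm y x, comparisonAngle_add hy hu hcy hcu]
  have hsides : ContinuousAt (fun v : Y × Y => (dist v.1 y, dist v.1 v.2, dist y v.2)) (x, u) := by
    fun_prop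
  rw [← hpi]
  exact ((continuousAt_comparisonAngle hy hu hcy hcu).comp_of_eq hsides rfl).tendsto

theorem tendsto_comparisonAngle_dist_isosceles {c : ℝ} {x u : Y} (hux : u ≠ x)
    (hcu : √c * dist x u < Real.pi) :
    Tendsto (fun v : (Y × Y) × Y =>
        comparisonAngle c (dist v.1.2 v.2) (dist v.1.2 v.1.1) (dist v.1.2 v.2))
      (𝓝[{v | v.1.2 ≠ v.1.1}] ((x, x), u)) (𝓝 (Real.pi / 2)) := by
  have hleg : Tendsto (fun v : (Y × Y) × Y => dist v.1.2 v.2)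
      (𝓝[{v | v.1.2 ≠ v.1.1}] ((x, x), u)) (𝓝 (dist x u)) :=
    (Continuous.tendsto (by fun_prop) _).mono_left nhdsWithin_le_nhds
  have hbase : Tendsto (fun v : (Y × Y) × Y => dist v.1.2 v.1.1)
      (𝓝[{v | v.1.2 ≠ v.1.1}] ((x, x), u)) (𝓝[>] 0) :=
    tendsto_nhdsWithin_of_tendsto_nhds_of_eventually_within _
      ((Continuous.tendsto' (by fun_prop) ((x, x), u) 0 (dist_self x)).mono_left nhdsWithin_le_nhds)
      (eventually_mem_nhdsWithin.mono fun v hv => dist_pos.mpr hv)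
  have hangle := (tendsto_comparisonAngle_isosceles (dist_pos.mpr hux.symm) hcu).comp
    (hleg.prodMk hbase)
  simpa only [Function.comp_def] using hangle

/-- Write `v = ((x', z), u')`. If `u'` were not closer to `x'` than to `z`, the comparison angles
at `z` for `x', y, u'` would be `π`, almost `π` and almost `π / 2` at least. -/
theorem IsAlexandrovCurvGE.eventually_dist_lt {c : ℝ} (hY : IsAlexandrovCurvGE Y c) {x y u : Y}
    (hyx : y ≠ x) (hux : u ≠ x) (hyu : dist y u = dist y x + dist x u)
    (hcy : √c * dist y x < Real.pi) (hcu : √c * dist x u < Real.pi) :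
    ∀ᶠ v : (Y × Y) × Y in 𝓝 ((x, x), u), v.1.2 ≠ v.1.1 →
      dist v.1.1 v.1.2 + dist v.1.2 y = dist v.1.1 y → dist v.1.1 v.2 < dist v.1.2 v.2 := by
  have hstraight : ∀ᶠ v : (Y × Y) × Y in 𝓝 ((x, x), u), 3 * Real.pi / 4 <
      comparisonAngle c (dist v.1.2 y) (dist v.1.2 v.2) (dist y v.2) :=
    ((tendsto_comparisonAngle_of_between hyx hux hyu hcy hcu).comp
      (Continuous.tendsto' (f := fun v : (Y × Y) × Y => (v.1.2, v.2)) (by fun_prop) _ _ rfl))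
      |>.eventually_const_lt (by linarith [Real.pi_pos])
  have hright : ∀ᶠ v : (Y × Y) × Y in 𝓝 ((x, x), u), v.1.2 ≠ v.1.1 → Real.pi / 4 <
      comparisonAngle c (dist v.1.2 v.2) (dist v.1.2 v.1.1) (dist v.1.2 v.2) :=
    eventually_nhdsWithin_iff.mp ((tendsto_comparisonAngle_dist_isosceles hux hcu)
      |>.eventually_const_lt (by linarith [Real.pi_pos]))
  have hpos {f : (Y × Y) × Y → ℝ} (hf : Continuous f) (h : 0 < f ((x, x), u)) :
      ∀ᶠ v in 𝓝 ((x, x), u), 0 < f v := hf.continuousAt.eventually_const_lt h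
  have hlt {f : (Y × Y) × Y → ℝ} (hf : Continuous f) (h : √c * f ((x, x), u) < Real.pi) :
      ∀ᶠ v in 𝓝 ((x, x), u), √c * f v < Real.pi :=
    (hf.const_mul (√c)).continuousAt.eventually_lt_const h
  filter_upwards [hstraight, hright,
    hpos (f := fun v => dist v.1.2 y) (by fun_prop) (dist_pos.mpr hyx.symm),
    hpos (f := fun v => dist v.1.2 v.2) (by fun_prop) (dist_pos.mpr hux.symm),
    hlt (f := fun v => dist v.1.2 y) (by fun_prop) (by rwa [dist_comm]),
    hlt (f := fun v => dist v.1.2 v.2) (by fun_prop) hcu,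
    hlt (f := fun v => dist v.2 v.1.1) (by fun_prop) (by rwa [dist_comm]),
    hlt (f := fun v => dist v.1.2 v.1.1) (by fun_prop) (by simpa using Real.pi_pos)]
  rintro ⟨⟨x', z⟩, u'⟩ hstraight hright hzy hzu hcy hcu hcux hcx hne hbetween
  by_contra! hle
  have hzx : 0 < dist z x' := dist_pos.mpr hne
  have hxzy : comparisonAngle c (dist z x') (dist z y) (dist x' y) = Real.pi := by
    rw [← hbetween, dist_comm x' z, comparisonAngle_add hzx hzy hcx hcy]
  have huzx : Real.pi / 4 < comparisonAngle c (dist z u') (dist z x') (dist u' x') :=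
    (hright hne).trans_le
      (comparisonAngle_mono hzu hzx hcu hcx dist_nonneg (by rwa [dist_comm u']) hcux.le)
  linarith [hY.2 z x' y u' hne (dist_pos.mp hzy) (dist_pos.mp hzu)]

end AlexandrovSpace

namespace InradiusCollapseLimit

variable (S : InradiusCollapseLimit)

theorem dist_η_le (p q : S.C0) {s t : ℝ} (hs : s ∈ Icc 0 S.t0) (ht : t ∈ Icc 0 S.t0) :
    dist (S.η p s) (S.η q t) ≤ dist p q + |s - t| := by
  calc dist (S.η p s) (S.η q t)
      ≤ dist (S.η p s) (S.η q s) + dist (S.η q s) (S.η q t) := dist_triangle _ _ _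
    _ ≤ dist p q + |s - t| := add_le_add (S.hηslices p q s hs) (S.hperp q s hs t ht).le

theorem continuousOn_uncurry_η :
    ContinuousOn (Function.uncurry S.η) (univ ×ˢ Icc 0 S.t0) := by
  refine (LipschitzOnWith.of_dist_le_mul (K := 2) ?_).continuousOn
  rintro ⟨p, s⟩ ⟨-, hs⟩ ⟨q, t⟩ ⟨-, ht⟩
  calc dist (S.η p s) (S.η q t) ≤ dist p q + dist s t := S.dist_η_le p q hs ht
    _ ≤ 2 * dist (p, s) (q, t) := by
      rw [two_mul]
      exact add_le_add (le_max_left _ _) (le_max_right _ _)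

variable {S}

theorem continuous_η_left {t : ℝ} (ht : t ∈ Icc 0 S.t0) : Continuous fun p => S.η p t :=
  (LipschitzWith.of_dist_le_mul (K := 1) fun p q => by simpa using S.hηslices p q t ht).continuous

variable (S) in
theorem continuous_η0 : Continuous S.η0 := by
  simpa only [funext S.hη0] using continuous_η_left (left_mem_Icc.mpr S.ht0.le)

theorem dist_η_η0 (p : S.C0) {t : ℝ} (ht : t ∈ Icc 0 S.t0) : dist (S.η p t) (S.η0 p) = t := by
  rw [S.hη0, S.hperp p t ht 0 (left_mem_Icc.mpr S.ht0.le), sub_zero, abs_of_nonneg ht.1]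

theorem le_dist_η (p : S.C0) {t : ℝ} (ht : t ∈ Icc 0 S.t0) {x : S.Y} (hx : x ∈ S.X) :
    t ≤ dist (S.η p t) x :=
  (S.hdistX p t ht).symm.trans_le (infDist_le_dist_of_mem hx)

theorem η_mem_X_iff (p : S.C0) {t : ℝ} (ht : t ∈ Icc 0 S.t0) : S.η p t ∈ S.X ↔ t = 0 := by
  refine ⟨fun h => le_antisymm ?_ ht.1, ?_⟩
  · simpa using le_dist_η p ht h
  · rintro rfl
    exact S.hη0 p ▸ S.hη0X p

/-- The tube over `V ⊆ C0`: the union of the perpendiculars to `X` issuing from `V`. -/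
def tube (S : InradiusCollapseLimit) (V : Set S.C0) : Set S.Y := image2 S.η V (Icc 0 S.t0)

theorem η_mem_tube {V : Set S.C0} {p : S.C0} (hp : p ∈ V) {t : ℝ} (ht : t ∈ Icc 0 S.t0) :
    S.η p t ∈ S.tube V :=
  mem_image2_of_mem hp ht

theorem tube_union (V W : Set S.C0) : S.tube (V ∪ W) = S.tube V ∪ S.tube W :=
  image2_union_left

theorem isClosed_tube {V : Set S.C0} (hV : IsClosed V) : IsClosed (S.tube V) := by
  rw [tube, ← image_uncurry_prod]
  exact ((hV.isCompact.prod isCompact_Icc).image_of_continuousOn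
    (S.continuousOn_uncurry_η.mono (prod_mono_left (subset_univ V)))).isClosed

theorem tube_inter_X_subset (V : Set S.C0) : S.tube V ∩ S.X ⊆ S.η0 '' V := by
  rintro _ ⟨⟨p, hp, t, ht, rfl⟩, hX⟩
  rw [(η_mem_X_iff p ht).mp hX, ← S.hη0]
  exact mem_image_of_mem _ hp

theorem tube_inter_tube_subset {V W : Set S.C0} (hVW : Disjoint V W) :
    S.tube V ∩ S.tube W ⊆ S.X := by
  rintro _ ⟨⟨p, hp, s, hs, rfl⟩, ⟨q, hq, t, ht, heq⟩⟩
  by_contra hX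
  have hs0 : 0 < s := hs.1.lt_of_ne' (mt (η_mem_X_iff p hs).mpr hX)
  have ht0 : 0 < t := ht.1.lt_of_ne' (mt (η_mem_X_iff q ht).mpr (heq ▸ hX))
  have hpq : p = q := (S.hηinj p q s t ⟨hs0, hs.2⟩ ⟨ht0, ht.2⟩ heq.symm).1
  exact disjoint_left.mp hVW hp (hpq ▸ hq)

theorem tube_mem_nhds {x : S.Y} (hx : x ∈ S.X) {V : Set S.C0}
    (hV : ∀ p, S.η0 p = x → V ∈ 𝓝 p) : S.tube V ∈ 𝓝 x := by
  obtain ⟨ε, hε, hball⟩ := Metric.eventually_nhds_iff.mp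
    (S.continuous_η0.isClosedMap.eventually_nhds_fiber x (p := (· ∈ V)) hV)
  refine Metric.mem_nhds_iff.mpr ⟨ε / 2, half_pos hε, fun y hy => ?_⟩
  obtain ⟨p, t, ht, rfl⟩ := S.hηsurj y
  have hfoot : dist (S.η0 p) x < ε := by
    have hle : t ≤ dist (S.η p t) x := le_dist_η p ht hx
    have htri := dist_triangle_left (S.η0 p) x (S.η p t)
    rw [dist_η_η0 p ht] at htri
    linarith [mem_ball.mp hy]
  exact η_mem_tube (hball hfoot p rfl) ht

variable (S) in
theorem eventually_mem_Ioc_t0 : ∀ᶠ t in 𝓝[>] 0, t ∈ Ioc 0 S.t0 := Ioc_mem_nhdsGT S.ht0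

theorem tendsto_η (p : S.C0) : Tendsto (S.η p) (𝓝[>] 0) (𝓝 (S.η0 p)) :=
  tendsto_iff_dist_tendsto_zero.mpr ((tendsto_id.mono_left nhdsWithin_le_nhds).congr'
    (S.eventually_mem_Ioc_t0.mono fun _ ht => (dist_η_η0 p (Ioc_subset_Icc_self ht)).symm))

variable {x : S.Y} {p q : S.C0}

theorem tube_union_tube_mem_nhds (hfib : S.η0 ⁻¹' {x} = {p, q}) {V W : Set S.C0}
    (hV : V ∈ 𝓝 p) (hW : W ∈ 𝓝 q) : S.tube V ∪ S.tube W ∈ 𝓝 x := by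
  have hp : S.η0 p = x := hfib.symm.subset (mem_insert p {q})
  rw [← tube_union]
  refine tube_mem_nhds (hp ▸ S.hη0X p) fun w hw => ?_
  rcases hfib.subset hw with rfl | rfl
  exacts [mem_of_superset hV subset_union_left, mem_of_superset hW subset_union_right]

/-- A geodesic between the two points passes from the tube around one perpendicular to the tube
around the other, which it can do only through `X`. -/
theorem eventually_dist_η_η_eq_add (hpq : p ≠ q) (hfib : S.η0 ⁻¹' {x} = {p, q}) :
    ∀ᶠ s in 𝓝[>] 0, dist (S.η p s) (S.η q s) = s + s := by
  obtain ⟨c, hgeo, -⟩ := S.alexY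
  obtain ⟨V, hpV, hV, W, hqW, hW, hVW⟩ := exists_open_nhds_disjoint_closure hpq
  have hp : S.η0 p = x := hfib.symm.subset (mem_insert p {q})
  have hq : S.η0 q = x := hfib.symm.subset (mem_insert_of_mem p rfl)
  have hcover : S.tube (closure V) ∪ S.tube (closure W) ∈ 𝓝 x :=
    tube_union_tube_mem_nhds hfib (mem_of_superset (hV.mem_nhds hpV) subset_closure)
      (mem_of_superset (hW.mem_nhds hqW) subset_closure)
  have hlim : Tendsto (fun s => (S.η p s, S.η q s)) (𝓝[>] 0) (𝓝 (x, x)) :=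
    (hp ▸ tendsto_η p).prodMk_nhds (hq ▸ tendsto_η q)
  filter_upwards [S.eventually_mem_Ioc_t0, hlim.eventually
    (hgeo.eventually_exists_between_mem_inter (isClosed_tube isClosed_closure)
      (isClosed_tube isClosed_closure) hcover)] with s hs hbetween
  have hs := Ioc_subset_Icc_self hs
  obtain ⟨z, hz, hdist⟩ := hbetween (η_mem_tube (subset_closure hpV) hs)
    (η_mem_tube (subset_closure hqW) hs)
  have hzX : z ∈ S.X := tube_inter_tube_subset hVW hz
  refine le_antisymm ?_ ?_
  · calc dist (S.η p s) (S.η q s) ≤ dist (S.η p s) x + dist (S.η q s) x :=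
          dist_triangle_right _ _ _
      _ = s + s := congrArg₂ _ (hp ▸ dist_η_η0 p hs) (hq ▸ dist_η_η0 q hs)
  · rw [← hdist, dist_comm z]
    exact add_le_add (le_dist_η p hs hzX) (le_dist_η q hs hzX)

theorem exists_eventually_between_notMem_tube (hpq : p ≠ q) (hfib : S.η0 ⁻¹' {x} = {p, q}) :
    ∃ y ≠ x, ∃ W ∈ 𝓝 q, ∀ᶠ v : S.Y × S.Y in 𝓝 (x, x), v.1 ∈ S.X → v.2 ≠ v.1 →
      dist v.1 v.2 + dist v.2 y = dist v.1 y → v.2 ∉ S.tube W := by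
  obtain ⟨c, hY⟩ := S.alexY
  have hp : S.η0 p = x := hfib.symm.subset (mem_insert p {q})
  have hq : S.η0 q = x := hfib.symm.subset (mem_insert_of_mem p rfl)
  have hsmall : ∀ᶠ s in 𝓝[>] (0 : ℝ), √c * s < Real.pi :=
    (Continuous.tendsto (by fun_prop) 0).eventually_lt_const (by simpa using Real.pi_pos)
      |>.filter_mono nhdsWithin_le_nhds
  obtain ⟨s, hs, hcs, hdist⟩ := (S.eventually_mem_Ioc_t0.and
    (hsmall.and (eventually_dist_η_η_eq_add hpq hfib))).exists
  have hs' := Ioc_subset_Icc_self hs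
  have hyx : dist (S.η p s) x = s := hp ▸ dist_η_η0 p hs'
  have hux : dist (S.η q s) x = s := hq ▸ dist_η_η0 q hs'
  have hyx0 : S.η p s ≠ x := dist_pos.mp (hs.1.trans_eq hyx.symm)
  have hux0 : S.η q s ≠ x := dist_pos.mp (hs.1.trans_eq hux.symm)
  have hcloser := hY.eventually_dist_lt hyx0 hux0
    (by rw [hdist, hyx, dist_comm, hux]) (by rwa [hyx]) (by rwa [dist_comm, hux])
  have hslice : Tendsto (fun v : (S.Y × S.Y) × S.C0 => (v.1, S.η v.2 s)) (𝓝 ((x, x), q))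
      (𝓝 ((x, x), S.η q s)) :=
    (continuous_fst.prodMk ((continuous_η_left hs').comp continuous_snd)).tendsto _
  have hprod := hslice.eventually hcloser
  rw [nhds_prod_eq, eventually_prod_iff] at hprod
  obtain ⟨P, hP, W, hW, hPW⟩ := hprod
  refine ⟨S.η p s, hyx0, {w | W w}, hW, ?_⟩
  have hnear : ∀ᶠ v : S.Y × S.Y in 𝓝 (x, x), dist v.2 v.1 < s :=
    (Continuous.tendsto (by fun_prop) _).eventually_lt_const (by simpa using hs.1)
  filter_upwards [hP, hnear]
  rintro ⟨x', z⟩ hv hzx hx' hne hbetween ⟨w, hw, τ, hτ, rfl⟩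
  have hlt : dist x' (S.η w s) < dist (S.η w τ) (S.η w s) := hPW hv hw hne hbetween
  rw [S.hperp w τ hτ s hs', abs_sub_comm, abs_of_nonneg
    (sub_nonneg.mpr ((le_dist_η w hτ hx').trans hzx.le)), dist_comm] at hlt
  linarith [le_dist_η w hs' hx', hτ.1]

theorem nhdsWithin_le_map_η0 (hpq : p ≠ q) (hfib : S.η0 ⁻¹' {x} = {p, q}) :
    𝓝[S.X] x ≤ map S.η0 (𝓝 p) := by
  obtain ⟨c, hgeo, -⟩ := S.alexY
  obtain ⟨y, hyx, W, hW, havoid⟩ := exists_eventually_between_notMem_tube hpq hfib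
  refine ((closed_nhds_basis p).map S.η0).ge_iff.mpr fun V hV => ?_
  have havoid' : ∀ᶠ x' in 𝓝 x, ∀ᶠ z in 𝓝 x', x' ∈ S.X → z ≠ x' →
      dist x' z + dist z y = dist x' y → z ∉ S.tube W := by
    have hdiag : Tendsto (fun x' : S.Y => (x', x')) (𝓝 x) (𝓝 (x, x)) :=
      Continuous.tendsto (by fun_prop) x
    exact (hdiag.eventually havoid.eventually_nhds).mono fun x' h => h.curry_nhds.self_of_nhds
  have hcover := eventually_mem_nhds_iff.mpr (tube_union_tube_mem_nhds hfib hV.1 hW)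
  filter_upwards [mem_nhdsWithin_of_mem_nhds havoid', mem_nhdsWithin_of_mem_nhds hcover,
    mem_nhdsWithin_of_mem_nhds (eventually_ne_nhds hyx.symm), self_mem_nhdsWithin]
    with x' havoid hcover hne hx'
  have hfreq : ∃ᶠ z in 𝓝 x', z ∈ S.tube V :=
    ((hgeo.frequently_between hne).and_eventually (havoid.and hcover)).mono
      fun z hz => hz.2.2.resolve_right (hz.2.1 hx' hz.1.1 hz.1.2)
  exact tube_inter_X_subset V
    ⟨(isClosed_tube hV.2).closure_subset (mem_closure_iff_frequently.mpr hfreq), hx'⟩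

theorem exists_fiber_eq_pair (hfib : ∃ a b : S.C0, {p | S.η0 p = x} ⊆ {a, b})
    (hx : x ∈ S.X2set) : ∃ p q, p ≠ q ∧ S.η0 ⁻¹' {x} = {p, q} := by
  obtain ⟨-, p, q, hpq, hp, hq⟩ := hx
  obtain ⟨a, b, hab⟩ := hfib
  exact ⟨p, q, hpq, eq_pair_of_subset_pair hab hp hq hpq⟩

theorem ncard_fiber_eq_two (hfib : ∃ a b : S.C0, {p | S.η0 p = x} ⊆ {a, b})
    (hx : x ∈ S.X2set) : (S.η0 ⁻¹' {x}).ncard = 2 :=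
  ncard_eq_two.mpr (exists_fiber_eq_pair hfib hx)

theorem nhdsWithin_le_map_η0_of_mem_X2set
    (hfib : ∃ a b : S.C0, {q | S.η0 q = S.η0 p} ⊆ {a, b}) (hp : S.η0 p ∈ S.X2set) :
    𝓝[S.X] (S.η0 p) ≤ map S.η0 (𝓝 p) := by
  obtain ⟨a, b, hab, hpair⟩ := exists_fiber_eq_pair hfib hp
  have hmem : p ∈ S.η0 ⁻¹' {S.η0 p} := rfl
  rcases hpair.subset hmem with rfl | rfl
  · exact nhdsWithin_le_map_η0 hab hpair
  · exact nhdsWithin_le_map_η0 hab.symm (hpair.trans (pair_comm _ _))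

theorem X2set_mem_nhdsWithin (hfib : ∃ a b : S.C0, {p | S.η0 p = x} ⊆ {a, b})
    (hx : x ∈ S.X2set) : S.X2set ∈ 𝓝[S.X] x := by
  obtain ⟨p, q, hpq, hpair⟩ := exists_fiber_eq_pair hfib hx
  filter_upwards [self_mem_nhdsWithin, eventually_exists_ne_of_nhdsWithin_le_map hpq
    (nhdsWithin_le_map_η0 hpq hpair)
    (nhdsWithin_le_map_η0 hpq.symm (hpair.trans (pair_comm p q)))] with y hy hab
  exact ⟨hy, hab⟩

end InradiusCollapseLimit

/-- In the limit setting of inradius collapse, the restriction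
`η0|_{C0²} : C0² → X_2` is a double covering map and `X_2` is open in `X`. -/
theorem eta0_restriction_is_double_covering (S : InradiusCollapseLimit)
    (hfib : ∀ x : S.Y, ∃ a b : S.C0, {p : S.C0 | S.η0 p = x} ⊆ {a, b})
    (hmaps : Set.MapsTo S.η0 (S.η0 ⁻¹' S.X2set) S.X2set) :
    IsCoveringMap (Set.MapsTo.restrict S.η0 _ _ hmaps) ∧
    (∀ x : S.X2set, Set.ncard (Set.MapsTo.restrict S.η0 _ _ hmaps ⁻¹' {x}) = 2) ∧
    (∃ U : Set S.Y, IsOpen U ∧ S.X2set = U ∩ S.X) := by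
  have hX2 : S.X2set ⊆ S.X := fun x hx => hx.1
  have hcard (x : S.X2set) : (S.X2set.restrictPreimage S.η0 ⁻¹' {x}).ncard = 2 :=
    (ncard_preimage_restrictPreimage S.η0 x).trans
      (InradiusCollapseLimit.ncard_fiber_eq_two (hfib x) x.2)
  have hopen : IsOpenMap (S.X2set.restrictPreimage S.η0) :=
    isOpenMap_restrictPreimage fun p hp => (nhdsWithin_mono _ hX2).trans
      (InradiusCollapseLimit.nhdsWithin_le_map_η0_of_mem_X2set (hfib _) hp)
  have hcover : IsCoveringMap (S.X2set.restrictPreimage S.η0) :=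
    isCoveringMap_of_ncard_fiber_eq S.continuous_η0.restrictPreimage hopen
      (S.continuous_η0.isClosedMap.restrictPreimage S.X2set) two_ne_zero hcard
  exact ⟨hcover, hcard, exists_isOpen_eq_inter hX2 fun x hx =>
    InradiusCollapseLimit.X2set_mem_nhdsWithin (hfib x) hx⟩
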